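/- arXiv:2111.10301 — 3 statements merged into one kernel-verified Lean document; each statement's English description precedes it below -/
import Mathlib

section
/- Let x : [0,1] → ℝ be a continuous function with Faber–Schauder coefficients θ_{m,k}. Consider the conditions: (a) there exists a nondecreasing subexponential function γ₁ : ℕ → [1,∞) such that for all sufficiently large m, max_{0≤k≤2^m−1} |θ_{m,k}| ≤ γ₁(m) · min_{0≤k≤2^m−1} |θ_{m,k}|; (b) there exist ν ∈ ℕ₀ and a nondecreasing subexponential function γ₂ : ℕ → [1,∞) such that for all sufficiently large m ≥ ν, max_{0≤k≤2^{m−ν}−1} Σ_{j=2^ν k}^{2^ν(k+1)−1} θ²_{m,j} ≤ γ₂(m) · min_{0≤k≤2^{m−ν}−1} Σ_{j=2^ν k}^{2^ν(k+1)−1} θ²_{m,j}. Then (a) implies (b), and (b) implies that the Faber–Schauder coefficients of x satisfy the reverse Jensen condition. -/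
/-!
Write `D_m = ∑_{k<2^m} θ_{m,k}²`, so that `s_n² = ∑_{m<n} D_m`, and let
`f_n(k) = ∑_{m<n} 2^m θ²_{m,⌊2^{m-n+1}k⌋}`.

The implication (a) ⇒ (b) holds with `ν = 0` and `γ₂ = γ₁²`.

For (b) ⇒ reverse Jensen, two facts suffice.
* The average of `f_n` over `k < 2^{n-1}` is exactly `s_n²` (`mean_levelSum`).
* Each `θ_{m,j}²` is at most its block sum, hence at most `γ₂(m)` times every block sum of
  generation `m`, hence `2^m θ_{m,j}² ≤ 2^ν γ₂(m) D_m`. The finitely many generations to which (b)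
  does not apply only cost a constant, so `f_n(k) ≤ 2^N γ₂(n) s_n²` uniformly in `k`
  (`levelSum_le`).

The uniform bound gives the upper estimate of the average of `f_n^{p/2}`. The lower estimate is
Jensen's inequality when `p ≥ 2`; when `p < 2` it follows from `f^{p/2} ≥ f · K^{p/2-1}` for
`0 ≤ f ≤ K`, with `K = 2^N γ₂(n) s_n²`. All constants are dominated by `(2^N γ₂(n))^p`, which is
subexponential.
-/

open Filter Finset

noncomputable section

/-- The `n`-th dyadic `p`-th variation of `x`. -/
def dyadicVar (x : ℝ → ℝ) (p : ℝ) (n : ℕ) : ℝ :=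
  ∑ k ∈ Finset.range (2 ^ n), |x (((k : ℝ) + 1) / 2 ^ n) - x ((k : ℝ) / 2 ^ n)| ^ p

/-- `x` is nonconstant on `[0,1]`. -/
def Nonconstant (x : ℝ → ℝ) : Prop :=
  ∃ s ∈ Set.Icc (0 : ℝ) 1, ∃ t ∈ Set.Icc (0 : ℝ) 1, x s ≠ x t

/-- `x` admits the Hurst roughness exponent `H ∈ (0,1]`. -/
def HasHurstExponent (x : ℝ → ℝ) (H : ℝ) : Prop :=
  0 < H ∧ H ≤ 1 ∧
  (∀ p : ℝ, 1 / H < p → Tendsto (dyadicVar x p) atTop (nhds 0)) ∧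
  (∀ p : ℝ, 0 < p → p < 1 / H → Tendsto (dyadicVar x p) atTop atTop)

/-- Faber–Schauder coefficient `θ_{m,k}` of `x`. -/
def fsCoeff (x : ℝ → ℝ) (m k : ℕ) : ℝ :=
  2 ^ ((m : ℝ) / 2) *
    (2 * x ((2 * (k : ℝ) + 1) / 2 ^ (m + 1)) - x ((k : ℝ) / 2 ^ m) - x (((k : ℝ) + 1) / 2 ^ m))

/-- `s_n = (∑_{m<n} ∑_{k<2^m} θ_{m,k}²)^{1/2}`. -/
def sSeq (x : ℝ → ℝ) (n : ℕ) : ℝ :=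
  Real.sqrt (∑ m ∈ Finset.range n, ∑ k ∈ Finset.range (2 ^ m), fsCoeff x m k ^ 2)

/-- `ξ_n = (1/n) log₂ s_n`. -/
def xiSeq (x : ℝ → ℝ) (n : ℕ) : ℝ := Real.logb 2 (sSeq x n) / n

/-- A nondecreasing function `ϱ : ℕ → [1,∞)` is subexponential if `(1/n) log ϱ(n) → 0`. -/
def Subexponential (ϱ : ℕ → ℝ) : Prop :=
  Monotone ϱ ∧ (∀ n, 1 ≤ ϱ n) ∧ Tendsto (fun n : ℕ => Real.log (ϱ n) / n) atTop (nhds 0)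

/-- The quantity `2^{-(n-1)} ∑_{k<2^{n-1}} (∑_{m<n} 2^m θ²_{m,⌊2^{m-n+1}k⌋})^{p/2}`;
note that `⌊2^{m-n+1}k⌋ = k / 2^{n-1-m}` (natural number division). -/
def RJquantity (x : ℝ → ℝ) (p : ℝ) (n : ℕ) : ℝ :=
  (∑ k ∈ Finset.range (2 ^ (n - 1)),
      (∑ m ∈ Finset.range n, 2 ^ m * fsCoeff x m (k / 2 ^ (n - 1 - m)) ^ 2) ^ (p / 2)) /
    2 ^ (n - 1)

/-- The reverse Jensen condition on the Faber–Schauder coefficients of `x`. -/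
def ReverseJensen (x : ℝ → ℝ) : Prop :=
  ∀ p : ℝ, 1 ≤ p → ∃ np : ℕ, ∃ ϱ : ℕ → ℝ, Subexponential ϱ ∧
    ∀ n : ℕ, np ≤ n →
      (ϱ n)⁻¹ * sSeq x n ^ p ≤ RJquantity x p n ∧ RJquantity x p n ≤ ϱ n * sSeq x n ^ p

/-- Condition (a): the absolute values of the Faber–Schauder coefficients in each
generation are comparable up to a subexponential factor. -/
def CondA (x : ℝ → ℝ) : Prop :=
  ∃ γ₁ : ℕ → ℝ, Subexponential γ₁ ∧ ∃ M : ℕ, ∀ m : ℕ, M ≤ m →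
    (Finset.range (2 ^ m)).sup' (Finset.nonempty_range_iff.mpr (by positivity))
        (fun k => |fsCoeff x m k|) ≤
      γ₁ m * (Finset.range (2 ^ m)).inf' (Finset.nonempty_range_iff.mpr (by positivity))
        (fun k => |fsCoeff x m k|)

/-- Condition (b): blockwise sums of squared Faber–Schauder coefficients in each
generation are comparable up to a subexponential factor. -/
def CondB (x : ℝ → ℝ) : Prop :=
  ∃ ν : ℕ, ∃ γ₂ : ℕ → ℝ, Subexponential γ₂ ∧ ∃ M : ℕ, ∀ m : ℕ, ν ≤ m → M ≤ m →
    (Finset.range (2 ^ (m - ν))).sup' (Finset.nonempty_range_iff.mpr (by positivity))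
        (fun k => ∑ j ∈ Finset.Ico (2 ^ ν * k) (2 ^ ν * (k + 1)), fsCoeff x m j ^ 2) ≤
      γ₂ m * (Finset.range (2 ^ (m - ν))).inf' (Finset.nonempty_range_iff.mpr (by positivity))
        (fun k => ∑ j ∈ Finset.Ico (2 ^ ν * k) (2 ^ ν * (k + 1)), fsCoeff x m j ^ 2)

lemma Subexponential.const_mul_rpow {γ : ℕ → ℝ} (hγ : Subexponential γ) {C p : ℝ}
    (hC : 1 ≤ C) (hp : 0 ≤ p) : Subexponential (fun n => (C * γ n) ^ p) := by
  obtain ⟨hm, h1, ht⟩ := hγ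
  have hpos : ∀ n, 0 < γ n := fun n => lt_of_lt_of_le one_pos (h1 n)
  have hC0 : 0 < C := by linarith
  refine ⟨fun a b hab => ?_, fun n => ?_, ?_⟩
  · have := hm hab
    have := hpos a
    dsimp only
    gcongr
  · exact Real.one_le_rpow (one_le_mul_of_one_le_of_one_le hC (h1 n)) hp
  · have h2 : Tendsto (fun n : ℕ => p * (Real.log C / n + Real.log (γ n) / n)) atTop
        (nhds (p * (0 + 0))) :=
      ((tendsto_const_div_atTop_nhds_zero_nat _).add ht).const_mul p
    simp only [add_zero, mul_zero] at h2
    refine h2.congr fun n => ?_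
    rw [Real.log_rpow (mul_pos hC0 (hpos n)), Real.log_mul hC0.ne' (hpos n).ne']
    ring

lemma condA_imp_condB (x : ℝ → ℝ) (h : CondA x) : CondB x := by
  obtain ⟨γ, hγ, M, hM⟩ := h
  refine ⟨0, fun n => (1 * γ n) ^ (2 : ℝ), hγ.const_mul_rpow le_rfl (by norm_num), M,
    fun m _ hm => ?_⟩
  have h := hM m hm
  have key : ∀ j < 2 ^ m, ∀ i < 2 ^ m, |fsCoeff x m j| ≤ γ m * |fsCoeff x m i| := by
    intro j hj i hi
    have hγ0 : 0 ≤ γ m := le_trans zero_le_one (hγ.2.1 m)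
    calc |fsCoeff x m j| ≤ _ :=
          Finset.le_sup' (fun k => |fsCoeff x m k|) (Finset.mem_range.mpr hj)
      _ ≤ _ := h
      _ ≤ _ := mul_le_mul_of_nonneg_left
          (Finset.inf'_le (fun k => |fsCoeff x m k|) (Finset.mem_range.mpr hi)) hγ0
  obtain ⟨i, hi, hi2⟩ := Finset.exists_mem_eq_inf' (s := Finset.range (2 ^ (m - 0)))
    (Finset.nonempty_range_iff.mpr (by positivity))
    (fun k => ∑ j ∈ Finset.Ico (2 ^ 0 * k) (2 ^ 0 * (k + 1)), fsCoeff x m j ^ 2)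
  rw [hi2]
  refine Finset.sup'_le _ _ fun j hj => ?_
  simp only [pow_zero, one_mul, Nat.Ico_succ_singleton, Finset.sum_singleton, Nat.sub_zero,
    Finset.mem_range, Real.rpow_two] at hi hj ⊢
  rw [← sq_abs (fsCoeff x m j), ← sq_abs (fsCoeff x m i), ← mul_pow]
  exact pow_le_pow_left₀ (abs_nonneg _) (key j hj i hi) 2

lemma sum_range_div (g : ℕ → ℝ) (A B : ℕ) (hB : 0 < B) :
    ∑ k ∈ Finset.range (B * A), g (k / B) = B * ∑ j ∈ Finset.range A, g j := by
  induction A with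
  | zero => simp
  | succ A ih =>
    rw [Nat.mul_succ, Finset.sum_range_add, ih, Finset.sum_range_succ, mul_add]
    congr 1
    rw [Finset.sum_congr rfl (g := fun _ => g A)]
    · simp
    · intro i hi
      rw [Nat.mul_add_div hB, Nat.div_eq_of_lt (Finset.mem_range.mp hi), add_zero]

lemma sum_blocks (g : ℕ → ℝ) (A B : ℕ) :
    ∑ k ∈ Finset.range A, ∑ j ∈ Finset.Ico (B * k) (B * (k + 1)), g j =
      ∑ j ∈ Finset.range (B * A), g j := by
  induction A with
  | zero => simp
  | succ A ih =>
    rw [Finset.sum_range_succ, ih, Finset.sum_range_add_sum_Ico]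
    exact Nat.mul_le_mul_left _ (Nat.le_succ A)

/-- The total `D_m = ∑_{k<2^m} θ_{m,k}²` of generation `m`. -/
def genSum (x : ℝ → ℝ) (m : ℕ) : ℝ := ∑ k ∈ Finset.range (2 ^ m), fsCoeff x m k ^ 2

/-- The inner sum `f_n(k) = ∑_{m<n} 2^m θ²_{m,⌊2^{m-n+1}k⌋}` of `RJquantity`. -/
def levelSum (x : ℝ → ℝ) (n k : ℕ) : ℝ :=
  ∑ m ∈ Finset.range n, 2 ^ m * fsCoeff x m (k / 2 ^ (n - 1 - m)) ^ 2

lemma levelSum_nonneg (x : ℝ → ℝ) (n k : ℕ) : 0 ≤ levelSum x n k :=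
  Finset.sum_nonneg fun _ _ => by positivity

lemma genSum_nonneg (x : ℝ → ℝ) (m : ℕ) : 0 ≤ genSum x m :=
  Finset.sum_nonneg fun _ _ => by positivity

lemma sSeq_sq (x : ℝ → ℝ) (n : ℕ) : sSeq x n ^ 2 = ∑ m ∈ Finset.range n, genSum x m :=
  Real.sq_sqrt (Finset.sum_nonneg fun m _ => genSum_nonneg x m)

/-- The average of `f_n` over `k < 2^{n-1}` equals `s_n²`. -/
lemma mean_levelSum (x : ℝ → ℝ) (n : ℕ) :
    ∑ k ∈ Finset.range (2 ^ (n - 1)), levelSum x n k = 2 ^ (n - 1) * sSeq x n ^ 2 := by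
  rw [sSeq_sq, Finset.mul_sum]
  unfold levelSum
  rw [Finset.sum_comm]
  refine Finset.sum_congr rfl fun m hm => ?_
  have hmn : m ≤ n - 1 := by have := Finset.mem_range.mp hm; omega
  have hsplit : 2 ^ (n - 1) = 2 ^ (n - 1 - m) * 2 ^ m := by
    rw [← pow_add, Nat.sub_add_cancel hmn]
  have hsplitR : (2 : ℝ) ^ (n - 1) = 2 ^ (n - 1 - m) * 2 ^ m := by
    rw [← pow_add, Nat.sub_add_cancel hmn]
  rw [← Finset.mul_sum, hsplit, sum_range_div (fun j => fsCoeff x m j ^ 2) _ _ (by positivity),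
    hsplitR, genSum]
  push_cast
  ring

/-- Condition (b) bounds every single squared coefficient by a subexponential multiple of the
average of its generation. The power `2 ^ N` absorbs both the block length and the generations
to which (b) does not apply. -/
lemma exists_coeff_bound (x : ℝ → ℝ) (h : CondB x) :
    ∃ N : ℕ, ∃ γ : ℕ → ℝ, Subexponential γ ∧ ∀ m j : ℕ, j < 2 ^ m →
      2 ^ m * fsCoeff x m j ^ 2 ≤ 2 ^ N * γ m * genSum x m := by
  obtain ⟨ν, γ, hγ, M, hM⟩ := h
  refine ⟨max M ν, γ, hγ, fun m j hj => ?_⟩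
  have hD := genSum_nonneg x m
  have hγ1 := hγ.2.1 m
  have hγ0 : 0 ≤ γ m := by linarith
  rcases lt_or_ge m (max M ν) with hlt | hge
  · have h1 : fsCoeff x m j ^ 2 ≤ genSum x m :=
      Finset.single_le_sum (f := fun k => fsCoeff x m k ^ 2) (fun _ _ => sq_nonneg _)
        (Finset.mem_range.mpr hj)
    calc (2 : ℝ) ^ m * fsCoeff x m j ^ 2 ≤ 2 ^ max M ν * genSum x m := by
          gcongr
          norm_num
      _ ≤ 2 ^ max M ν * γ m * genSum x m := by
          gcongr
          exact le_mul_of_one_le_right (by positivity) hγ1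
  · have hν : ν ≤ m := le_trans (le_max_right _ _) hge
    have h := hM m hν (le_trans (le_max_left _ _) hge)
    have hsplit : 2 ^ m = 2 ^ ν * 2 ^ (m - ν) := by
      rw [← pow_add, Nat.add_sub_cancel' hν]
    have hsplitR : (2 : ℝ) ^ m = 2 ^ ν * 2 ^ (m - ν) := by
      rw [← pow_add, Nat.add_sub_cancel' hν]
    set B : ℕ → ℝ := fun k =>
      ∑ i ∈ Finset.Ico (2 ^ ν * k) (2 ^ ν * (k + 1)), fsCoeff x m i ^ 2 with hB
    have hjk : j / 2 ^ ν < 2 ^ (m - ν) := by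
      rw [Nat.div_lt_iff_lt_mul (by positivity), mul_comm, ← hsplit]
      exact hj
    have hjB : fsCoeff x m j ^ 2 ≤ B (j / 2 ^ ν) := by
      refine Finset.single_le_sum (f := fun k => fsCoeff x m k ^ 2) (fun _ _ => sq_nonneg _)
        (Finset.mem_Ico.mpr ⟨Nat.mul_div_le _ _, ?_⟩)
      exact Nat.lt_mul_div_succ j (by positivity)
    have hall : ∀ k ∈ Finset.range (2 ^ (m - ν)), fsCoeff x m j ^ 2 ≤ γ m * B k := by
      intro k hk
      calc fsCoeff x m j ^ 2 ≤ B (j / 2 ^ ν) := hjB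
        _ ≤ _ := Finset.le_sup' B (Finset.mem_range.mpr hjk)
        _ ≤ _ := h
        _ ≤ γ m * B k := mul_le_mul_of_nonneg_left (Finset.inf'_le B hk) hγ0
    have hsum := Finset.sum_le_sum hall
    rw [← Finset.mul_sum, hB, sum_blocks, ← hsplit] at hsum
    simp only [Finset.sum_const, Finset.card_range, nsmul_eq_mul] at hsum
    push_cast at hsum
    change _ ≤ γ m * genSum x m at hsum
    calc (2 : ℝ) ^ m * fsCoeff x m j ^ 2
        = 2 ^ ν * (2 ^ (m - ν) * fsCoeff x m j ^ 2) := by rw [hsplitR]; ring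
      _ ≤ 2 ^ ν * (γ m * genSum x m) := by gcongr
      _ ≤ 2 ^ max M ν * (γ m * genSum x m) := by
          gcongr
          · norm_num
          · exact le_max_right _ _
      _ = _ := by ring

/-- The generation-wise coefficient bounds add up to a bound of `f_n`, uniform in `k`. -/
lemma levelSum_le (x : ℝ → ℝ) {N : ℕ} {γ : ℕ → ℝ} (hγ : Subexponential γ)
    (hb : ∀ m j : ℕ, j < 2 ^ m → 2 ^ m * fsCoeff x m j ^ 2 ≤ 2 ^ N * γ m * genSum x m)
    (n k : ℕ) (hk : k < 2 ^ (n - 1)) :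
    levelSum x n k ≤ 2 ^ N * γ n * sSeq x n ^ 2 := by
  rw [sSeq_sq, Finset.mul_sum]
  refine Finset.sum_le_sum fun m hm => ?_
  have hmn := Finset.mem_range.mp hm
  have hj : k / 2 ^ (n - 1 - m) < 2 ^ m := by
    rw [Nat.div_lt_iff_lt_mul (by positivity), ← pow_add, show m + (n - 1 - m) = n - 1 by omega]
    exact hk
  have hD := genSum_nonneg x m
  have hγm : γ m ≤ γ n := hγ.1 hmn.le
  refine (hb m _ hj).trans ?_
  gcongr

/-- Two-sided comparison of an average of `q`-th powers with the `q`-th power of the average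
`S`, for a family bounded by `K * S`. -/
lemma mean_rpow_bounds (L : ℕ) (hL : 0 < L) (f : ℕ → ℝ) (S K q r : ℝ) (hf : ∀ k < L, 0 ≤ f k)
    (hS : 0 ≤ S) (hK : 1 ≤ K) (hq : 0 < q) (hqr : q ≤ r) (hqr' : 1 - q ≤ r)
    (hmean : ∑ k ∈ Finset.range L, f k = L * S) (hfK : ∀ k < L, f k ≤ K * S) :
    (K ^ r)⁻¹ * S ^ q ≤ (∑ k ∈ Finset.range L, f k ^ q) / L ∧
      (∑ k ∈ Finset.range L, f k ^ q) / L ≤ K ^ r * S ^ q := by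
  have hL0 : (0 : ℝ) < L := by exact_mod_cast hL
  have hK0 : 0 < K := by linarith
  have hSq : 0 ≤ S ^ q := Real.rpow_nonneg hS q
  have hsum0 : 0 ≤ ∑ k ∈ Finset.range L, f k ^ q :=
    Finset.sum_nonneg fun k hk => Real.rpow_nonneg (hf k (Finset.mem_range.mp hk)) q
  have hKr : 1 ≤ K ^ r := Real.one_le_rpow hK (hq.le.trans hqr)
  constructor
  · rcases le_or_gt 1 q with h1 | h1
    · have hj := Real.rpow_arith_mean_le_arith_mean_rpow (Finset.range L) (fun _ => (L : ℝ)⁻¹) f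
        (fun _ _ => by positivity) (by simp [hL0.ne'])
        (fun k hk => hf k (Finset.mem_range.mp hk)) h1
      rw [← Finset.mul_sum, ← Finset.mul_sum, hmean, inv_mul_cancel_left₀ hL0.ne'] at hj
      rw [div_eq_inv_mul]
      exact (mul_le_of_le_one_left hSq (inv_le_one_of_one_le₀ hKr)).trans hj
    · rcases hS.eq_or_lt with h0 | h0
      · rw [← h0, Real.zero_rpow hq.ne', mul_zero]
        positivity
      · have hKS : 0 < K * S := by positivity
        -- `t ↦ t ^ (q - 1)` is decreasing, so `f ^ q ≥ f * (K * S) ^ (q - 1)`.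
        have hpt : ∀ k ∈ Finset.range L, f k * (K * S) ^ (q - 1) ≤ f k ^ q := by
          intro k hk
          have hk := Finset.mem_range.mp hk
          rcases (hf k hk).eq_or_lt with hz | hz
          · rw [← hz, zero_mul, Real.zero_rpow hq.ne']
          · calc f k * (K * S) ^ (q - 1) ≤ f k * f k ^ (q - 1) :=
                  mul_le_mul_of_nonneg_left
                    (Real.rpow_le_rpow_of_nonpos hz (hfK k hk) (by linarith)) hz.le
              _ = f k ^ q := by
                  rw [Real.rpow_sub_one hz.ne', mul_div_cancel₀ _ hz.ne']
        have hs := Finset.sum_le_sum hpt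
        rw [← Finset.sum_mul, hmean] at hs
        rw [le_div_iff₀ hL0]
        refine le_trans ?_ hs
        have hKq : (K ^ r)⁻¹ ≤ K ^ (q - 1) := by
          rw [← Real.rpow_neg hK0.le]
          exact Real.rpow_le_rpow_of_exponent_le hK (by linarith)
        calc (K ^ r)⁻¹ * S ^ q * L ≤ K ^ (q - 1) * S ^ q * L := by gcongr
          _ = L * S * (K * S) ^ (q - 1) := by
              rw [Real.mul_rpow hK0.le hS, Real.rpow_sub_one h0.ne']
              field_simp
  · rw [div_le_iff₀ hL0]
    calc ∑ k ∈ Finset.range L, f k ^ q ≤ ∑ _k ∈ Finset.range L, K ^ r * S ^ q := by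
          refine Finset.sum_le_sum fun k hk => ?_
          have hk := Finset.mem_range.mp hk
          calc f k ^ q ≤ (K * S) ^ q := Real.rpow_le_rpow (hf k hk) (hfK k hk) hq.le
            _ = K ^ q * S ^ q := Real.mul_rpow hK0.le hS
            _ ≤ K ^ r * S ^ q := by gcongr
      _ = K ^ r * S ^ q * L := by simp [mul_comm]

lemma condB_imp_reverseJensen (x : ℝ → ℝ) (h : CondB x) : ReverseJensen x := by
  obtain ⟨N, γ, hγ, hb⟩ := exists_coeff_bound x h
  intro p hp
  have hN : (1 : ℝ) ≤ 2 ^ N := one_le_pow₀ (by norm_num)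
  refine ⟨0, fun n => (2 ^ N * γ n) ^ p, hγ.const_mul_rpow hN (by linarith), fun n _ => ?_⟩
  have hs : sSeq x n ^ p = (sSeq x n ^ 2) ^ (p / 2) := by
    rw [← Real.rpow_natCast, ← Real.rpow_mul (show 0 ≤ sSeq x n from Real.sqrt_nonneg _)]
    congr 1
    push_cast
    ring
  have hm := mean_levelSum x n
  have := mean_rpow_bounds (2 ^ (n - 1)) (by positivity) (levelSum x n) (sSeq x n ^ 2)
    (2 ^ N * γ n) (p / 2) p (fun k _ => levelSum_nonneg x n k) (sq_nonneg _)
    (one_le_mul_of_one_le_of_one_le hN (hγ.2.1 n)) (by linarith) (by linarith) (by linarith)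
    (by push_cast; exact hm) (fun k hk => levelSum_le x hγ hb n k hk)
  push_cast at this
  rw [← hs] at this
  exact this

theorem stmt4 (x : ℝ → ℝ) (hx : ContinuousOn x (Set.Icc 0 1)) :
    (CondA x → CondB x) ∧ (CondB x → ReverseJensen x) := by
  exact ⟨condA_imp_condB x, condB_imp_reverseJensen x⟩
end
end

section
/- Let x : [0,1] → ℝ be a nonconstant continuous function that admits the Hurst roughness exponent H and for which ξ := lim_{n→∞} ξ_n exists. If ξ > 1/2 then H ≤ 1/2, and if ξ < 1/2 then H ≥ 1/2. -/
/-! For `p = 2` the dyadic variation is an explicit function of `s_n`: the parallelogram law applied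
to the two half-increments of each dyadic interval gives `2 ^ n * V_n = V_0 + s_n ^ 2`
(`two_pow_mul_dyadicVar`). If `ξ > 1/2`, then `s_n ^ 2 ≥ 2 ^ n` eventually, so `V_n ≥ 1` and `V_n`
does not tend to `0`, which rules out `H > 1/2`. If `ξ < 1/2`, then `s_n ^ 2 ≤ 2 ^ n` eventually,
so `V_n` is bounded and does not tend to infinity, which rules out `H < 1/2`. -/

open Filter Finset

noncomputable section

lemma sum_range_two_mul_eq (f : ℕ → ℝ) (N : ℕ) :
    ∑ k ∈ range (2 * N), f k = ∑ k ∈ range N, (f (2 * k) + f (2 * k + 1)) := by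
  induction N with
  | zero => simp
  | succ N ih =>
    rw [show 2 * (N + 1) = 2 * N + 1 + 1 by ring, sum_range_succ, sum_range_succ, ih,
      sum_range_succ]
    ring

lemma dyadicVar_two (x : ℝ → ℝ) (n : ℕ) :
    dyadicVar x 2 n =
      ∑ k ∈ range (2 ^ n), (x (((k : ℝ) + 1) / 2 ^ n) - x ((k : ℝ) / 2 ^ n)) ^ 2 := by
  unfold dyadicVar
  refine sum_congr rfl fun k _ => ?_
  rw [Real.rpow_two, sq_abs]

lemma fsCoeff_sq (x : ℝ → ℝ) (m k : ℕ) :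
    fsCoeff x m k ^ 2 = 2 ^ m *
      (2 * x ((2 * (k : ℝ) + 1) / 2 ^ (m + 1)) - x ((k : ℝ) / 2 ^ m)
        - x (((k : ℝ) + 1) / 2 ^ m)) ^ 2 := by
  unfold fsCoeff
  rw [mul_pow, ← Real.rpow_natCast (2 ^ ((m : ℝ) / 2)) 2, ← Real.rpow_mul (by norm_num),
    ← Real.rpow_natCast 2 m]
  congr 2
  push_cast
  ring

/-- One refinement step: with half-increments `a`, `b` on each interval of level `n`,
`2 * (a ^ 2 + b ^ 2) = (a + b) ^ 2 + (a - b) ^ 2`. -/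
lemma two_pow_succ_mul_dyadicVar (x : ℝ → ℝ) (n : ℕ) :
    2 ^ (n + 1) * dyadicVar x 2 (n + 1) =
      2 ^ n * dyadicVar x 2 n + ∑ k ∈ range (2 ^ n), fsCoeff x n k ^ 2 := by
  rw [dyadicVar_two, dyadicVar_two, show (2 : ℕ) ^ (n + 1) = 2 * 2 ^ n by ring,
    sum_range_two_mul_eq, mul_sum, mul_sum, ← sum_add_distrib]
  refine sum_congr rfl fun k _ => ?_
  rw [fsCoeff_sq]
  have h0 : ((2 * k : ℕ) : ℝ) / 2 ^ (n + 1) = (k : ℝ) / 2 ^ n := by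
    push_cast; field_simp; ring
  have h1 : (((2 * k : ℕ) : ℝ) + 1) / 2 ^ (n + 1) = (2 * (k : ℝ) + 1) / 2 ^ (n + 1) := by
    push_cast; rfl
  have h2 : ((2 * k + 1 : ℕ) : ℝ) / 2 ^ (n + 1) = (2 * (k : ℝ) + 1) / 2 ^ (n + 1) := by
    push_cast; rfl
  have h3 : (((2 * k + 1 : ℕ) : ℝ) + 1) / 2 ^ (n + 1) = ((k : ℝ) + 1) / 2 ^ n := by
    push_cast; field_simp; ring
  rw [h0, h1, h2, h3]
  ring

lemma two_pow_mul_dyadicVar (x : ℝ → ℝ) (n : ℕ) :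
    2 ^ n * dyadicVar x 2 n = dyadicVar x 2 0 + sSeq x n ^ 2 := by
  unfold sSeq
  rw [Real.sq_sqrt (sum_nonneg fun _ _ => sum_nonneg fun _ _ => sq_nonneg _)]
  induction n with
  | zero => simp
  | succ n ih => rw [two_pow_succ_mul_dyadicVar, ih, sum_range_succ]; ring

lemma two_rpow_half_sq (n : ℕ) : ((2 : ℝ) ^ ((n : ℝ) / 2)) ^ 2 = 2 ^ n := by
  rw [← Real.rpow_natCast (2 ^ ((n : ℝ) / 2)) 2, ← Real.rpow_mul (by norm_num),
    ← Real.rpow_natCast 2 n]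
  congr 1
  push_cast
  ring

lemma two_pow_le_sSeq_sq {x : ℝ → ℝ} {n : ℕ} (hn : 0 < n) (h : 1 / 2 < xiSeq x n) :
    2 ^ n ≤ sSeq x n ^ 2 := by
  have hnR : (0 : ℝ) < n := by exact_mod_cast hn
  unfold xiSeq at h
  rw [lt_div_iff₀ hnR] at h
  -- The junk value `logb 2 0 = 0` is incompatible with `h`.
  have hs : 0 < sSeq x n := by
    refine lt_of_le_of_ne (Real.sqrt_nonneg _) fun h0 => ?_
    rw [← h0, Real.logb_zero] at h
    linarith
  rw [Real.lt_logb_iff_rpow_lt (by norm_num) hs] at h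
  rw [← two_rpow_half_sq]
  refine pow_le_pow_left₀ (by positivity) ?_ 2
  rw [show (n : ℝ) / 2 = 1 / 2 * n by ring]
  exact h.le

lemma sSeq_sq_le_two_pow {x : ℝ → ℝ} {n : ℕ} (hn : 0 < n) (h : xiSeq x n < 1 / 2) :
    sSeq x n ^ 2 ≤ 2 ^ n := by
  have hnR : (0 : ℝ) < n := by exact_mod_cast hn
  have hs0 : 0 ≤ sSeq x n := Real.sqrt_nonneg _
  rcases hs0.eq_or_lt with h0 | hs
  · rw [← h0, zero_pow two_ne_zero]; positivity
  unfold xiSeq at h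
  rw [div_lt_iff₀ hnR, Real.logb_lt_iff_lt_rpow (by norm_num) hs] at h
  rw [← two_rpow_half_sq]
  refine pow_le_pow_left₀ hs0 ?_ 2
  rw [show (n : ℝ) / 2 = 1 / 2 * n by ring]
  exact h.le

theorem stmt5 (x : ℝ → ℝ) (hx : ContinuousOn x (Set.Icc 0 1)) (hnc : Nonconstant x)
    (H ξ : ℝ) (hH : HasHurstExponent x H) (hξ : Tendsto (xiSeq x) atTop (nhds ξ)) :
    (1 / 2 < ξ → H ≤ 1 / 2) ∧ (ξ < 1 / 2 → 1 / 2 ≤ H) := by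
  obtain ⟨hH0, -, hzero, hinf⟩ := hH
  have hV0 : 0 ≤ dyadicVar x 2 0 := by
    rw [dyadicVar_two]; exact sum_nonneg fun _ _ => sq_nonneg _
  constructor
  · intro hlt
    by_contra! hcon
    have hV := hzero 2 (by rw [div_lt_iff₀ hH0]; linarith)
    obtain ⟨n, h1, h2, hn⟩ := ((hV.eventually_lt_const one_pos).and
      ((hξ.eventually_const_lt hlt).and (eventually_gt_atTop 0))).exists
    have hs := two_pow_le_sSeq_sq hn h2
    have hid := two_pow_mul_dyadicVar x n
    have hpos : (0 : ℝ) < 2 ^ n := by positivity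
    nlinarith
  · intro hlt
    by_contra! hcon
    have hV := hinf 2 two_pos (by rw [lt_div_iff₀ hH0]; linarith)
    obtain ⟨n, h1, h2, hn⟩ := ((hV.eventually_gt_atTop (dyadicVar x 2 0 + 1)).and
      ((hξ.eventually_lt_const hlt).and (eventually_gt_atTop 0))).exists
    have hs := sSeq_sq_le_two_pow hn h2
    have hid := two_pow_mul_dyadicVar x n
    have hone : (1 : ℝ) ≤ 2 ^ n := one_le_pow₀ (by norm_num)
    have hle : dyadicVar x 2 0 ≤ 2 ^ n * dyadicVar x 2 0 := le_mul_of_one_le_left hV0 hone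
    have hmul := mul_lt_mul_of_pos_left h1 (zero_lt_one.trans_le hone)
    linarith
end
end

section
/- Let x : [0,1] → ℝ be a nonconstant continuous function that admits the Hurst roughness exponent H and for which ξ := lim_{n→∞} ξ_n exists. If H ≥ 1/2, then H ≥ 1 − ξ. -/
/-!
Write `V_n` for the dyadic quadratic variation of `x`. The parallelogram identity, applied to the
increments over the two halves of each dyadic interval, makes the squared Faber–Schauder
coefficients telescope: `s_n ^ 2 = 2 ^ n * V_n - V_0` (`sum_sum_fsCoeff_sq`).

Let `H < q < 1` and `p = 1 / q`, so that `1 < p < 1 / H ≤ 2` and the `p`-th variation tends to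
infinity. Jensen's inequality (`dyadicVar_rpow_le`) bounds `V_n` below by a large multiple of
`2 ^ (n * (1 - 2 * q))`; hence `s_n ≥ 2 ^ (n * (1 - q))` eventually, and `ξ ≥ 1 - q`. As `s_n` is
nondecreasing, `ξ ≥ 0` in any case (`xi_nonneg`). If `H < 1 - ξ`, then any `q` strictly between these
numbers satisfies `q < 1`, and `ξ ≥ 1 - q > ξ` is a contradiction.
-/

open Filter Finset

noncomputable section

/-- The `n`-th dyadic quadratic variation of `x`, with a natural-number exponent. -/
def quadVar (x : ℝ → ℝ) (n : ℕ) : ℝ :=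
  ∑ k ∈ Finset.range (2 ^ n), (x (((k : ℝ) + 1) / 2 ^ n) - x ((k : ℝ) / 2 ^ n)) ^ 2

lemma sum_range_two_mul (f : ℕ → ℝ) (N : ℕ) :
    ∑ k ∈ Finset.range (2 * N), f k = ∑ k ∈ Finset.range N, (f (2 * k) + f (2 * k + 1)) := by
  induction N with
  | zero => simp
  | succ N ih =>
    rw [show 2 * (N + 1) = 2 * N + 1 + 1 by ring, Finset.sum_range_succ, Finset.sum_range_succ,
      Finset.sum_range_succ, ih]
    ring

/-- With `a`, `b` the increments over the two halves of a dyadic interval of generation `m`, this is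
`2 ^ m * (a - b) ^ 2 = 2 ^ (m + 1) * (a ^ 2 + b ^ 2) - 2 ^ m * (a + b) ^ 2`, summed over all such
intervals. -/
lemma sum_fsCoeff_sq (x : ℝ → ℝ) (m : ℕ) :
    ∑ k ∈ Finset.range (2 ^ m), fsCoeff x m k ^ 2
      = 2 ^ (m + 1) * quadVar x (m + 1) - 2 ^ m * quadVar x m := by
  unfold quadVar
  rw [show (2 : ℕ) ^ (m + 1) = 2 * 2 ^ m by ring, sum_range_two_mul, Finset.mul_sum,
    Finset.mul_sum, ← Finset.sum_sub_distrib]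
  refine Finset.sum_congr rfl fun k _ => ?_
  have h2 : ((2 : ℝ) ^ ((m : ℝ) / 2)) ^ 2 = 2 ^ m := by
    rw [← Real.rpow_natCast, ← Real.rpow_mul (by norm_num), ← Real.rpow_natCast]
    congr 1
    push_cast
    ring
  have e1 : ((2 * k : ℕ) : ℝ) / 2 ^ (m + 1) = (k : ℝ) / 2 ^ m := by
    push_cast
    field_simp
    ring
  have e2 : (((2 * k + 1 : ℕ) : ℝ) + 1) / 2 ^ (m + 1) = ((k : ℝ) + 1) / 2 ^ m := by
    push_cast
    field_simp
    ring
  rw [e1, e2]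
  unfold fsCoeff
  rw [mul_pow, h2]
  push_cast
  ring

lemma sum_sum_fsCoeff_sq (x : ℝ → ℝ) (n : ℕ) :
    ∑ m ∈ Finset.range n, ∑ k ∈ Finset.range (2 ^ m), fsCoeff x m k ^ 2
      = 2 ^ n * quadVar x n - quadVar x 0 := by
  simp_rw [sum_fsCoeff_sq]
  rw [Finset.sum_range_sub (fun m => 2 ^ m * quadVar x m)]
  simp

lemma quadVar_nonneg (x : ℝ → ℝ) (n : ℕ) : 0 ≤ quadVar x n :=
  Finset.sum_nonneg fun _ _ => sq_nonneg _

lemma sSeq_mono (x : ℝ → ℝ) : Monotone (sSeq x) := fun _ _ h =>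
  Real.sqrt_le_sqrt <| Finset.sum_le_sum_of_subset_of_nonneg (Finset.range_mono h)
    fun _ _ _ => Finset.sum_nonneg fun _ _ => sq_nonneg _

/-- Since `s_n` is nondecreasing, it cannot decay exponentially. If every `s_n` vanishes, the
convention `log₂ 0 = 0` makes `ξ_n = 0`. -/
lemma xi_nonneg {x : ℝ → ℝ} {ξ : ℝ} (hξ : Tendsto (xiSeq x) atTop (nhds ξ)) : 0 ≤ ξ := by
  by_cases h : ∃ N, 0 < sSeq x N
  · obtain ⟨N, hN⟩ := h
    refine le_of_tendsto_of_tendsto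
      (tendsto_const_div_atTop_nhds_zero_nat (Real.logb 2 (sSeq x N))) hξ ?_
    filter_upwards [eventually_ge_atTop N] with n hn
    exact div_le_div_of_nonneg_right
      (Real.logb_le_logb_of_le (by norm_num) hN (sSeq_mono x hn)) (Nat.cast_nonneg n)
  · push Not at h
    refine ge_of_tendsto' hξ fun n => ?_
    have h0 : sSeq x n = 0 := le_antisymm (h n) (Real.sqrt_nonneg _)
    simp [xiSeq, h0]

/-- Jensen's inequality over the `2 ^ n` increments, with exponent `2 q = 2 / p` for `p = 1 / q`. -/
lemma dyadicVar_rpow_le (x : ℝ → ℝ) {q : ℝ} (hq : 1 / 2 ≤ q) (n : ℕ) :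
    dyadicVar x (1 / q) n ^ (2 * q) ≤ (2 : ℝ) ^ ((n : ℝ) * (2 * q - 1)) * quadVar x n := by
  have hq0 : q ≠ 0 := by linarith
  have key := Real.rpow_sum_le_const_mul_sum_rpow (Finset.range (2 ^ n))
    (fun k : ℕ => |x (((k : ℝ) + 1) / 2 ^ n) - x ((k : ℝ) / 2 ^ n)| ^ (1 / q))
    (p := 2 * q) (by linarith)
  have habs : ∀ a : ℝ, |(|a| ^ (1 / q))| = |a| ^ (1 / q) := fun a =>
    abs_of_nonneg (Real.rpow_nonneg (abs_nonneg a) _)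
  have hpow : ∀ a : ℝ, (|a| ^ (1 / q)) ^ (2 * q) = a ^ 2 := fun a => by
    rw [← Real.rpow_mul (abs_nonneg a), show 1 / q * (2 * q) = ((2 : ℕ) : ℝ) by
      push_cast
      field_simp, Real.rpow_natCast, sq_abs]
  simp only [habs, hpow, Finset.card_range] at key
  rw [Real.rpow_mul (x := 2) (by norm_num), Real.rpow_natCast]
  push_cast at key
  exact key

theorem stmt7 (x : ℝ → ℝ) (hx : ContinuousOn x (Set.Icc 0 1)) (hnc : Nonconstant x)
    (H ξ : ℝ) (hH : HasHurstExponent x H) (hξ : Tendsto (xiSeq x) atTop (nhds ξ))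
    (hhalf : 1 / 2 ≤ H) : 1 - ξ ≤ H := by
  obtain ⟨hH0, -, -, hdiv⟩ := hH
  by_contra! hlt
  have hξ0 := xi_nonneg hξ
  obtain ⟨q, hq1, hq2⟩ := exists_between hlt
  have hq0 : 0 < q := by linarith
  have hV := hdiv (1 / q) (by positivity) (one_div_lt_one_div_of_lt hH0 hq1)
  suffices 1 - q ≤ ξ by linarith
  refine ge_of_tendsto hξ ?_
  -- The threshold `1 + quadVar x 0` leaves room for the boundary term of the telescoping sum.
  filter_upwards [hV.eventually_ge_atTop (1 + quadVar x 0), eventually_gt_atTop 0] with n hn hn0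
  have hQ := quadVar_nonneg x 0
  have h1 : 1 + quadVar x 0 ≤ dyadicVar x (1 / q) n ^ (2 * q) :=
    hn.trans (Real.self_le_rpow_of_one_le (by linarith) (by linarith))
  have h2 := h1.trans (dyadicVar_rpow_le x (by linarith) n)
  have hA : (1 : ℝ) ≤ 2 ^ ((n : ℝ) * (2 - 2 * q)) :=
    Real.one_le_rpow (by norm_num) (mul_nonneg (Nat.cast_nonneg n) (by linarith))
  have hAB : (2 : ℝ) ^ ((n : ℝ) * (2 - 2 * q)) * 2 ^ ((n : ℝ) * (2 * q - 1)) = 2 ^ n := by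
    rw [← Real.rpow_add (by norm_num), ← Real.rpow_natCast]
    congr 1
    ring
  have h3 : (2 : ℝ) ^ ((n : ℝ) * (2 - 2 * q)) ≤ 2 ^ n * quadVar x n - quadVar x 0 := by
    have := mul_le_mul_of_nonneg_left h2 (zero_le_one.trans hA)
    rw [← mul_assoc, hAB] at this
    nlinarith
  have h4 : (2 : ℝ) ^ ((n : ℝ) * (1 - q)) ≤ sSeq x n := by
    unfold sSeq
    rw [sum_sum_fsCoeff_sq]
    refine Real.le_sqrt_of_sq_le (le_trans (le_of_eq ?_) h3)
    rw [← Real.rpow_natCast, ← Real.rpow_mul (by norm_num)]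
    congr 1
    push_cast
    ring
  have h5 := Real.logb_le_logb_of_le (b := 2) (by norm_num) (by positivity) h4
  rw [Real.logb_rpow (by norm_num) (by norm_num)] at h5
  unfold xiSeq
  rw [le_div_iff₀ (by exact_mod_cast hn0)]
  linarith
end
end
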